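/- For every continuous injective map f : S³ → ℝ⁴ and every pair of metrics ρ₁, ρ₂ on ℝ⁴, each inducing the standard Euclidean topology of ℝ⁴, there exist five distinct points x₀, x₁, x₂, x₃, x₄ ∈ S³ such that, writing yᵢ = f(xᵢ): ρ₁(y₀,y₁) = ρ₁(y₁,y₂) = ρ₁(y₂,y₃) = ρ₁(y₃,y₄) = ρ₁(y₄,y₀) and ρ₂(y₀,y₂) = ρ₂(y₂,y₄) = ρ₂(y₄,y₁) = ρ₂(y₁,y₃) = ρ₂(y₃,y₀). -/

import Mathlib

/-- `ρ` is a metric on `E` that induces the (given) standard topology of `E`. -/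
def IsMetricEquivToStd {E : Type*} [TopologicalSpace E] (ρ : E → E → ℝ) : Prop :=
  (∀ x y, ρ x y = ρ y x) ∧
  (∀ x y, ρ x y = 0 ↔ x = y) ∧
  (∀ x y z, ρ x z ≤ ρ x y + ρ y z) ∧
  (∀ s : Set E, IsOpen s ↔ ∀ x ∈ s, ∃ ε > 0, {y | ρ x y < ε} ⊆ s)

/-- A cochain on ordered simplices with vertices in `α`, with coefficients in `𝔽₅`. -/
abbrev ListCochain (α : Type*) := List α → ZMod 5

namespace ListCochain

variable {α β : Type*}

/-- Pull-back of a cochain along a map of vertices. -/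
def pullback (f : α → β) : ListCochain β →ₗ[ZMod 5] ListCochain α :=
  LinearMap.funLeft (ZMod 5) (ZMod 5) (List.map f)

/-- Contraction with the vertex `x`: the cochain `l ↦ b (x :: l)`. -/
def contract (x : α) : ListCochain α →ₗ[ZMod 5] ListCochain α :=
  LinearMap.funLeft (ZMod 5) (ZMod 5) (List.cons x)

/-- The value of the simplicial coboundary of a cochain on a given ordered simplex. -/
def coboundaryAt : List α → (ListCochain α →ₗ[ZMod 5] ZMod 5)
  | [] => 0
  | x :: l => LinearMap.proj l - coboundaryAt l ∘ₗ contract x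

/-- The (augmented) simplicial coboundary. -/
def coboundary : ListCochain α →ₗ[ZMod 5] ListCochain α :=
  LinearMap.pi coboundaryAt

/-- The value at a given ordered simplex of the prism operator between `f` and `g`. -/
def prismAt (f g : α → β) : List α → (ListCochain β →ₗ[ZMod 5] ZMod 5)
  | [] => 0
  | x :: l => LinearMap.proj (f x :: g x :: l.map g) - prismAt f g l ∘ₗ contract (f x)

/-- The prism operator, a cochain homotopy between `pullback f` and `pullback g`. -/
def prism (f g : α → β) : ListCochain β →ₗ[ZMod 5] ListCochain α :=
  LinearMap.pi (prismAt f g)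

@[simp] lemma pullback_apply (f : α → β) (b : ListCochain β) (l : List α) :
    pullback f b l = b (l.map f) := rfl

@[simp] lemma contract_apply (x : α) (b : ListCochain α) (l : List α) :
    contract x b l = b (x :: l) := rfl

@[simp] lemma coboundary_nil (b : ListCochain α) : coboundary b [] = 0 := rfl

@[simp] lemma coboundary_cons (b : ListCochain α) (x : α) (l : List α) :
    coboundary b (x :: l) = b l - coboundary (contract x b) l := rfl

@[simp] lemma prism_nil (f g : α → β) (b : ListCochain β) : prism f g b [] = 0 := rfl

@[simp] lemma prism_cons (f g : α → β) (b : ListCochain β) (x : α) (l : List α) :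
    prism f g b (x :: l) = b (f x :: g x :: l.map g) - prism f g (contract (f x) b) l := rfl

lemma contract_coboundary (x : α) (b : ListCochain α) :
    contract x (coboundary b) = b - coboundary (contract x b) := rfl

lemma pullback_coboundary (f : α → β) (b : ListCochain β) :
    pullback f (coboundary b) = coboundary (pullback f b) := by
  funext l
  induction l generalizing b with
  | nil => rfl
  | cons x l ih =>
    have h := ih (contract (f x) b)
    rw [pullback_apply] at h
    rw [pullback_apply, List.map_cons, coboundary_cons, coboundary_cons, h]
    rfl

lemma coboundary_coboundary (b : ListCochain α) : coboundary (coboundary b) = 0 := by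
  funext l
  induction l generalizing b with
  | nil => rfl
  | cons x l ih =>
    have h := ih (contract x b)
    rw [coboundary_cons, contract_coboundary, map_sub, Pi.sub_apply, h]
    simp

lemma contract_prism (f g : α → β) (x : α) (b : ListCochain β) :
    contract x (prism f g b) =
      pullback g (contract (g x) (contract (f x) b)) - prism f g (contract (f x) b) := rfl

lemma prism_coboundary (f g : α → β) (b : ListCochain β) :
    prism f g (coboundary b) + coboundary (prism f g b) = pullback g b - pullback f b := by
  funext l
  induction l generalizing b with
  | nil => simp
  | cons x l ih =>
    have h := ih (contract (f x) b)
    have h2 := congrFun (pullback_coboundary g (contract (g x) (contract (f x) b))) l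
    simp only [Pi.add_apply, Pi.sub_apply, pullback_apply] at h h2 ⊢
    rw [prism_cons, coboundary_cons, coboundary_cons, coboundary_cons, contract_coboundary,
      contract_prism, map_sub, map_sub, Pi.sub_apply, Pi.sub_apply, ← h2, List.map_cons,
      List.map_cons]
    simp only [contract_apply] at h ⊢
    linear_combination h

lemma prism_eq_zero (f g : α → β) (b : ListCochain β) (l : List α)
    (h : ∀ l' : List β, (∀ y ∈ l', ∃ x ∈ l, y = f x ∨ y = g x) → b l' = 0) :
    prism f g b l = 0 := by
  induction l generalizing b with
  | nil => rfl
  | cons x l ih =>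
    rw [prism_cons, h, ih, sub_zero]
    · intro l' hl'
      refine h _ ?_
      intro y hy
      rcases List.mem_cons.1 hy with rfl | hy
      · exact ⟨x, by simp, Or.inl rfl⟩
      · obtain ⟨z, hz, hz'⟩ := hl' y hy
        exact ⟨z, by simp [hz], hz'⟩
    · intro y hy
      simp only [List.mem_cons, List.mem_map] at hy
      rcases hy with rfl | rfl | ⟨z, hz, rfl⟩
      · exact ⟨x, by simp, Or.inl rfl⟩
      · exact ⟨x, by simp, Or.inr rfl⟩
      · exact ⟨z, by simp [hz], Or.inr rfl⟩

/-- The cochain homotopy contracting onto the vertex `v` along the maps `s 0, …, s m`. -/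
def coneHomotopy (v : α) (s : ℕ → α → α) (m : ℕ) : ListCochain α →ₗ[ZMod 5] ListCochain α :=
  pullback (fun _ => v) ∘ₗ contract v - ∑ t ∈ Finset.range m, prism (s t) (s (t + 1))

lemma coneHomotopy_coboundary (v : α) (s : ℕ → α → α) (m : ℕ) (h0 : ∀ x, s 0 x = x)
    (hm : ∀ x, s m x = v) (b : ListCochain α) :
    coneHomotopy v s m (coboundary b) = b - coboundary (coneHomotopy v s m b) := by
  have h0' : s 0 = id := funext h0
  have hm' : s m = fun _ => v := funext hm
  have hsum : ∑ t ∈ Finset.range m, prism (s t) (s (t + 1)) (coboundary b) +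
      ∑ t ∈ Finset.range m, coboundary (prism (s t) (s (t + 1)) b) =
      pullback (fun _ => v) b - b := by
    rw [← Finset.sum_add_distrib]
    simp only [prism_coboundary]
    rw [Finset.sum_range_sub (fun t => pullback (s t) b), hm', h0']
    congr 1
    funext l
    simp
  have hc := pullback_coboundary (fun _ : α => v) (contract v b)
  simp only [coneHomotopy, LinearMap.sub_apply, LinearMap.comp_apply, LinearMap.sum_apply,
    contract_coboundary, map_sub, map_sum]
  rw [hc]
  linear_combination (-1 : ListCochain α) * hsum

/-- A cochain is alternating if swapping adjacent vertices changes its sign. -/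
def IsAlternating (b : ListCochain α) : Prop :=
  ∀ l₁ l₂ x y, b (l₁ ++ x :: y :: l₂) = -b (l₁ ++ y :: x :: l₂)

lemma IsAlternating.contract {b : ListCochain α} (hb : IsAlternating b) (x : α) :
    IsAlternating (contract x b) := fun l₁ l₂ y z => hb (x :: l₁) l₂ y z

lemma IsAlternating.coboundary {b : ListCochain α} (hb : IsAlternating b) :
    IsAlternating (coboundary b) := by
  intro l₁ l₂ x y
  induction l₁ generalizing b with
  | nil =>
    have h : ListCochain.contract y (ListCochain.contract x b) =
        -ListCochain.contract x (ListCochain.contract y b) := funext fun l => hb [] l x y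
    simp only [List.nil_append, coboundary_cons, h, map_neg, Pi.neg_apply, contract_apply]
    ring
  | cons z l₁ ih =>
    simp only [List.cons_append, coboundary_cons, ih (hb.contract z), hb l₁ l₂ x y]
    ring

lemma IsAlternating.perm {b : ListCochain α} (hb : IsAlternating b) {l l' : List α}
    (h : l.Perm l') : b l = b l' ∨ b l = -b l' := by
  induction h generalizing b with
  | nil => exact Or.inl rfl
  | cons x _ ih => exact ih (hb.contract x)
  | swap x y l => exact Or.inr (hb [] l y x)
  | trans _ _ ih₁ ih₂ =>
    rcases ih₁ hb with h₁ | h₁ <;> rcases ih₂ hb with h₂ | h₂ <;> simp [h₁, h₂]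

lemma IsAlternating.eq_zero_of_not_nodup {b : ListCochain α} (hb : IsAlternating b)
    {l : List α} (hl : ¬ l.Nodup) : b l = 0 := by
  classical
  obtain ⟨x, hx⟩ : ∃ x, List.Duplicate x l := by
    by_contra! h
    exact hl (List.nodup_iff_forall_not_duplicate.2 h)
  have hsub : [x, x].Sublist l := List.duplicate_iff_sublist.1 hx
  obtain ⟨l', hl'⟩ := hsub.exists_perm_append
  have h2 : b (x :: x :: l') = 0 := by
    have h := hb [] l' x x
    have h4 : (2 : ZMod 5) * b (x :: x :: l') = 0 := by
      simp only [List.nil_append] at h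
      linear_combination h
    have key : ∀ z : ZMod 5, 2 * z = 0 → z = 0 := by decide
    exact key _ h4
  rcases hb.perm hl' with h | h
  · rw [h]; exact h2
  · rw [h]; simpa using h2

end ListCochain

section Chains

open ListCochain

/-- The operators in the periodic resolution of `ℤ/5`: `r - 1` in even degree and the norm
`1 + r + ⋯ + r⁴` in odd degree, acting on cochains. -/
noncomputable def resolutionMap {α : Type*} (r : α → α) (k : ℕ) :
    Module.End (ZMod 5) (ListCochain α) :=
  if Even k then pullback r - 1
  else ∑ j ∈ Finset.range 5, (pullback r : Module.End (ZMod 5) (ListCochain α)) ^ j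

lemma pullback_pow {α : Type*} (r : α → α) (j : ℕ) :
    (pullback r : Module.End (ZMod 5) (ListCochain α)) ^ j = pullback (r^[j]) := by
  induction j with
  | zero => ext b l; simp
  | succ j ih =>
    rw [pow_succ, ih]
    ext b l
    change b ((l.map r^[j]).map r) = b (l.map r^[j + 1])
    rw [List.map_map, ← Function.iterate_succ']

lemma resolutionMap_even {α : Type*} (r : α → α) {k : ℕ} (hk : Even k) (b : ListCochain α)
    (l : List α) : resolutionMap r k b l = b (l.map r) - b l := by
  simp [resolutionMap, hk]

lemma resolutionMap_odd {α : Type*} (r : α → α) {k : ℕ} (hk : ¬ Even k) (b : ListCochain α)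
    (l : List α) : resolutionMap r k b l = ∑ j ∈ Finset.range 5, b (l.map r^[j]) := by
  simp [resolutionMap, hk, pullback_pow]

lemma resolutionMap_comp {α : Type*} (r : α → α) (hr : ∀ x, r^[5] x = x) (k : ℕ)
    (b : ListCochain α) : resolutionMap r k (resolutionMap r (k + 1) b) = 0 := by
  have h5 : (pullback r : Module.End (ZMod 5) (ListCochain α)) ^ 5 = 1 := by
    rw [pullback_pow]
    ext b l
    have : r^[5] = id := funext hr
    rw [this]
    simp
  rw [← Module.End.mul_apply]
  suffices h : resolutionMap r k * resolutionMap r (k + 1) = 0 by rw [h]; rfl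
  by_cases hk : Even k
  · rw [resolutionMap, resolutionMap, if_pos hk, if_neg (by simpa [Nat.even_add_one] using hk),
      mul_geom_sum, h5, sub_self]
  · rw [resolutionMap, resolutionMap, if_neg hk, if_pos (by simpa [Nat.even_add_one] using hk),
      geom_sum_mul, h5, sub_self]

lemma resolutionMap_coboundary {α : Type*} (r : α → α) (k : ℕ) (b : ListCochain α) :
    resolutionMap r k (coboundary b) = coboundary (resolutionMap r k b) := by
  unfold resolutionMap
  split_ifs
  · simp [pullback_coboundary]
  · simp [pullback_coboundary, pullback_pow]

/-- The set `S` of ordered simplices carries a `k`-chain representing the generator of the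
`k`-th homology of `ℤ/5`; chains are given by the linear functionals they induce on cochains. -/
def CarriesClass {α : Type*} (r : α → α) (k : ℕ) (S : Set (List α)) : Prop :=
  ∃ c : ListCochain α →ₗ[ZMod 5] ZMod 5,
    (∀ b, (∀ l ∈ S, b l = 0) → c b = 0) ∧
    (∀ b, c (resolutionMap r k (coboundary b)) = 0) ∧
    ∀ b : ℕ → ListCochain α, b 0 [] = 1 →
      (∀ j < k, ∀ l ∈ S, resolutionMap r j (b (j + 1)) l = coboundary (b j) l) →
      c (coboundary (b k)) = 1

lemma carriesClass_zero {α : Type*} (r : α → α) {S : Set (List α)} {x : α} (hx : [x] ∈ S) :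
    CarriesClass r 0 S := by
  refine ⟨LinearMap.proj [x], fun b hb => hb _ hx, fun b => ?_, fun b hb _ => ?_⟩
  · rw [LinearMap.proj_apply, resolutionMap_even r Even.zero]
    simp
  · simpa using hb

/-- If the small simplices `S` contract inside `S'` and `S` carries the class in degree `k`,
then `S'` carries the class in degree `k + 1`. -/
lemma CarriesClass.succ {α : Type*} {r : α → α} (hr : ∀ x, r^[5] x = x) {k : ℕ}
    {S S' : Set (List α)} (h : CarriesClass r k S) (hSS' : S ⊆ S')
    (hrS : ∀ l ∈ S, l.map r ∈ S)
    (v : α) (s : ℕ → α → α) (m : ℕ) (h0 : ∀ x, s 0 x = x) (hm : ∀ x, s m x = v)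
    (hcone : ∀ l ∈ S, v :: l.map (fun _ => v) ∈ S')
    (hprism : ∀ t < m, ∀ l ∈ S, ∀ l' : List α,
      (∀ y ∈ l', ∃ x ∈ l, y = s t x ∨ y = s (t + 1) x) → l' ∈ S') :
    CarriesClass r (k + 1) S' := by
  obtain ⟨c, hc, hcyc, hclass⟩ := h
  have hfill : ∀ b, c (resolutionMap r k (coneHomotopy v s m (coboundary b))) =
      c (resolutionMap r k b) := by
    intro b
    rw [coneHomotopy_coboundary v s m h0 hm, map_sub, map_sub, hcyc, sub_zero]
  have hrS' : ∀ j : ℕ, ∀ l ∈ S, l.map r^[j] ∈ S := by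
    intro j
    induction j with
    | zero => intro l hl; simpa using hl
    | succ j ih =>
      intro l hl
      have := ih _ (hrS l hl)
      rwa [List.map_map, ← Function.iterate_succ] at this
  have hres : ∀ b : ListCochain α, (∀ l ∈ S, b l = 0) →
      ∀ l ∈ S, resolutionMap r k b l = 0 := by
    intro b hb l hl
    by_cases hk : Even k
    · rw [resolutionMap_even r hk, hb l hl, hb _ (hrS l hl), sub_zero]
    · rw [resolutionMap_odd r hk]
      exact Finset.sum_eq_zero fun j _ => hb _ (hrS' j l hl)
  refine ⟨c ∘ₗ resolutionMap r k ∘ₗ coneHomotopy v s m, ?_, ?_, ?_⟩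
  · intro b hb
    refine hc _ (hres _ fun l hl => ?_)
    have h1 : ∑ t ∈ Finset.range m, prism (s t) (s (t + 1)) b l = 0 :=
      Finset.sum_eq_zero fun t ht => prism_eq_zero _ _ _ _ fun l' hl' =>
        hb _ (hprism t (Finset.mem_range.1 ht) l hl l' hl')
    have h2 := hb _ (hcone l hl)
    simp only [coneHomotopy, LinearMap.sub_apply, LinearMap.comp_apply, LinearMap.sum_apply,
      Pi.sub_apply, Finset.sum_apply, pullback_apply, contract_apply, h1, h2, sub_zero]
  · intro b
    rw [resolutionMap_coboundary, LinearMap.comp_apply, LinearMap.comp_apply, hfill,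
      resolutionMap_comp r hr, map_zero]
  · intro b hb0 hb
    rw [LinearMap.comp_apply, LinearMap.comp_apply, hfill,
      ← hclass b hb0 fun j hj l hl => hb j (by omega) l (hSS' hl), ← sub_eq_zero, ← map_sub]
    refine hc _ fun l hl => ?_
    rw [Pi.sub_apply, hb k (by omega) l (hSS' hl), sub_self]

end Chains

section Division

open ListCochain

variable {α : Type*}

lemma ListCochain.coboundary_eq_zero_of_sublist (b : ListCochain α) (l : List α)
    (h : ∀ l' : List α, l'.Sublist l → b l' = 0) : coboundary b l = 0 := by
  induction l generalizing b with
  | nil => rfl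
  | cons x l ih =>
    rw [coboundary_cons, h _ (List.sublist_cons_self x l),
      ih (contract x b) fun l' hl' => h _ (hl'.cons_cons x), sub_zero]

lemma ListCochain.coboundary_eq_zero_of_length (b : ListCochain α) (k m : ℕ)
    (h : ∀ l : List α, l.length + m ≠ k → b l = 0) (l : List α) (hl : l.length + m ≠ k + 1) :
    coboundary b l = 0 := by
  induction l generalizing b m with
  | nil => rfl
  | cons x l ih =>
    rw [List.length_cons] at hl
    rw [coboundary_cons, h l (by omega), zero_sub, neg_eq_zero]
    refine ih (contract x b) (m + 1) (fun l' hl' => h _ ?_) (by omega)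
    rw [List.length_cons]
    omega

/-- A family of ordered simplices, closed under faces and under the map `r`, together with an
equivariant map `τ` to `ℤ/5` that does not depend on the order of the vertices. -/
structure FreeFamily (r : α → α) (G : Set (List α)) (τ : List α → ZMod 5) : Prop where
  iterate : ∀ x, r^[5] x = x
  map_mem : ∀ l ∈ G, l.map r ∈ G
  sublist_mem : ∀ l ∈ G, ∀ l' : List α, l'.Sublist l → l' ∈ G
  equivariant : ∀ l ∈ G, l ≠ [] → τ (l.map r) = τ l + 1
  swap : ∀ l₁ l₂ x y, τ (l₁ ++ x :: y :: l₂) = τ (l₁ ++ y :: x :: l₂)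

variable {r : α → α} {G : Set (List α)} {τ : List α → ZMod 5}

lemma FreeFamily.map_iterate (h : FreeFamily r G τ) {l : List α} (hl : l ∈ G) (hne : l ≠ [])
    (j : ℕ) : l.map r^[j] ∈ G ∧ τ (l.map r^[j]) = τ l + j := by
  induction j with
  | zero => simpa using hl
  | succ j ih =>
    rw [Function.iterate_succ', ← List.map_map]
    refine ⟨h.map_mem _ ih.1, ?_⟩
    rw [h.equivariant _ ih.1 (by simpa using hne), ih.2]
    push_cast
    ring

/-- On a free family, the periodic resolution acts exactly on alternating cochains. -/
lemma FreeFamily.exists_resolutionMap_eq (h : FreeFamily r G τ) (k : ℕ) (a : ListCochain α)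
    (ha : IsAlternating a) (ha0 : a [] = 0) (hz : ∀ l ∈ G, resolutionMap r (k + 1) a l = 0) :
    ∃ b : ListCochain α, IsAlternating b ∧ (∀ l ∈ G, resolutionMap r k b l = a l) ∧
      ∀ l, (∀ j, a (l.map r^[j]) = 0) → b l = 0 := by
  classical
  by_cases hk : Even k
  · have hk' : ¬ Even (k + 1) := by simpa [Nat.even_add_one] using hk
    refine ⟨fun l => ∑ j ∈ Finset.range (τ l).val, a (l.map r^[5 - (τ l).val + j]), ?_, ?_,
      fun l hl => Finset.sum_eq_zero fun j _ => hl _⟩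
    · intro l₁ l₂ x y
      simp only [h.swap l₁ l₂ x y, ← Finset.sum_neg_distrib]
      refine Finset.sum_congr rfl fun j _ => ?_
      simp only [List.map_append, List.map_cons]
      exact ha _ _ _ _
    · intro l hl
      rw [resolutionMap_even r hk]
      by_cases hne : l = []
      · subst hne; simp [ha0]
      have hN := hz l hl
      rw [resolutionMap_odd r hk'] at hN
      rw [h.equivariant l hl hne]
      have h5 : r^[5] = id := funext h.iterate
      have hcomp : ∀ j, (l.map r).map r^[j] = l.map r^[j + 1] := fun j => by
        rw [List.map_map, Function.iterate_succ]
      have hper : ∀ j, a (l.map r^[j + 5]) = a (l.map r^[j]) := fun j => by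
        rw [Function.iterate_add, h5, Function.comp_id]
      have hper0 := hper 0
      have hid : a (l.map r^[0]) = a l := by simp
      simp only [hcomp]
      generalize τ l = t
      set A : ℕ → ZMod 5 := fun j => a (l.map r^[j]) with hA
      change ∑ j ∈ Finset.range 5, A j = 0 at hN
      change A 5 = A 0 at hper0
      change A 0 = a l at hid
      change ∑ j ∈ Finset.range (t + 1).val, A (5 - (t + 1).val + j + 1) -
        ∑ j ∈ Finset.range t.val, A (5 - t.val + j) = a l
      clear_value A
      rw [← hid]
      simp only [Finset.sum_range_succ, Finset.sum_range_zero] at hN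
      have e0 : (0 : ZMod 5).val = 0 := rfl
      have e1 : (1 : ZMod 5).val = 1 := rfl
      have e2 : (2 : ZMod 5).val = 2 := rfl
      have e3 : (3 : ZMod 5).val = 3 := rfl
      have e4 : (4 : ZMod 5).val = 4 := rfl
      have ht : t = 0 ∨ t = 1 ∨ t = 2 ∨ t = 3 ∨ t = 4 := by revert t; decide
      rcases ht with rfl | rfl | rfl | rfl | rfl
      · rw [show (0 + 1 : ZMod 5) = 1 from rfl, e0, e1]
        simp [hper0]
      · rw [show (1 + 1 : ZMod 5) = 2 from rfl, e1, e2]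
        simp [Finset.sum_range_succ, hper0]
      · rw [show (2 + 1 : ZMod 5) = 3 from rfl, e2, e3]
        simp [Finset.sum_range_succ, hper0]
      · rw [show (3 + 1 : ZMod 5) = 4 from rfl, e3, e4]
        simp [Finset.sum_range_succ, hper0]
      · rw [show (4 + 1 : ZMod 5) = 0 from rfl, e4, e0]
        simp [Finset.sum_range_succ]
        linear_combination -hN
  · have hk' : Even (k + 1) := by simpa [Nat.even_add_one] using hk
    refine ⟨fun l => if τ l = 0 then a l else 0, ?_, ?_,
      fun l hl => by simpa using fun _ => hl 0⟩
    · intro l₁ l₂ x y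
      simp only [h.swap l₁ l₂ x y, ha l₁ l₂ x y]
      split_ifs <;> simp
    · intro l hl
      rw [resolutionMap_odd r hk]
      by_cases hne : l = []
      · subst hne; simp [ha0]
      have hconst : ∀ j, a (l.map r^[j]) = a l := by
        intro j
        induction j with
        | zero => simp
        | succ j ih =>
          have := hz _ (h.map_iterate hl hne j).1
          rw [resolutionMap_even r hk', sub_eq_zero, List.map_map, ← Function.iterate_succ'] at this
          rw [this, ih]
      simp only [(h.map_iterate hl hne _).2, hconst]
      generalize τ l = t
      generalize a l = A
      revert t A
      decide

/-- On a free family, the generator in degree zero has a resolution by alternating cochains. -/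
lemma FreeFamily.exists_resolution (h : FreeFamily r G τ) :
    ∃ b : ℕ → ListCochain α, b 0 [] = 1 ∧ (∀ k, IsAlternating (b k)) ∧
      (∀ k l, l.length ≠ k → b k l = 0) ∧
      ∀ k, ∀ l ∈ G, resolutionMap r k (b (k + 1)) l = coboundary (b k) l := by
  classical
  let Inv : ℕ → ListCochain α → Prop := fun k b =>
    IsAlternating b ∧ (∀ l, l.length ≠ k → b l = 0) ∧
      ∀ l ∈ G, resolutionMap r (k + 1) (coboundary b) l = 0
  have step : ∀ k b, Inv k b → ∃ b', Inv (k + 1) b' ∧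
      ∀ l ∈ G, resolutionMap r k b' l = coboundary b l := by
    rintro k b ⟨hb, hdeg, hz⟩
    obtain ⟨b', hb', hres, hsupp⟩ :=
      h.exists_resolutionMap_eq k (coboundary b) hb.coboundary (coboundary_nil b) hz
    refine ⟨b', ⟨hb', fun l hl => hsupp l fun j => ?_, fun l hl => ?_⟩, hres⟩
    · exact coboundary_eq_zero_of_length b k 0 hdeg _ (by simpa using hl)
    have hpar : resolutionMap r (k + 1 + 1) = resolutionMap r k := by
      simp [resolutionMap, Nat.even_add_one]
    have h0 : coboundary (resolutionMap r k b' - coboundary b) l = 0 :=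
      coboundary_eq_zero_of_sublist _ _ fun l' hl' => by
        rw [Pi.sub_apply, hres l' (h.sublist_mem l hl l' hl'), sub_self]
    rw [map_sub, coboundary_coboundary, sub_zero] at h0
    rw [hpar, resolutionMap_coboundary, h0]
  choose! next hnext hrel using step
  let b₀ : ListCochain α := fun l => if l = [] then 1 else 0
  have hb₀ : Inv 0 b₀ := by
    refine ⟨fun l₁ l₂ x y => by simp [b₀], fun l hl => if_neg fun h0 => hl (by simp [h0]),
      fun l _ => ?_⟩
    rw [resolutionMap_coboundary]
    suffices hs : resolutionMap r (0 + 1) b₀ = 0 by rw [hs]; simp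
    funext l
    rw [resolutionMap_odd r (by simp)]
    simp only [b₀, List.map_eq_nil_iff, Finset.sum_const, Finset.card_range, Pi.zero_apply]
    split_ifs <;> rfl
  let b : ℕ → ListCochain α := fun k => Nat.rec b₀ next k
  have hb : ∀ k, Inv k (b k) := by
    intro k
    induction k with
    | zero => exact hb₀
    | succ k ih => exact hnext k _ ih
  exact ⟨b, by simp [b, b₀], fun k => (hb k).1, fun k => (hb k).2.1, fun k => hrel k _ (hb k)⟩

/-- A labelling by at most `k` labels which is equivariant and sends the simplices of `S` to a
free family cannot exist if `S` carries the class in degree `k`. -/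
lemma not_carriesClass_of_labelling {V : Type*} [Fintype α] (h : FreeFamily r G τ) {k : ℕ}
    (hcard : Fintype.card α ≤ k) {g : V → V} {S : Set (List V)} (lab : V → α)
    (hG : ∀ l ∈ S, l.map lab ∈ G)
    (hlab : ∀ l ∈ S, ∀ x ∈ l, ∀ j : ℕ, lab (g^[j] x) = r^[j] (lab x)) :
    ¬ CarriesClass g k S := by
  classical
  rintro ⟨c, hc, -, hclass⟩
  obtain ⟨b, hb0, halt, hdeg, hrel⟩ := h.exists_resolution
  have hmap : ∀ l ∈ S, ∀ j : ℕ, (l.map g^[j]).map lab = (l.map lab).map r^[j] := by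
    intro l hl j
    rw [List.map_map, List.map_map]
    exact List.map_congr_left fun x hx => hlab l hl x hx j
  have hpull : ∀ k, ∀ l ∈ S, resolutionMap g k (pullback lab (b (k + 1))) l =
      coboundary (pullback lab (b k)) l := by
    intro k l hl
    rw [← pullback_coboundary, pullback_apply, ← hrel k _ (hG l hl)]
    by_cases hk : Even k
    · have h1 := hmap l hl 1
      rw [Function.iterate_one, Function.iterate_one] at h1
      rw [resolutionMap_even g hk, resolutionMap_even r hk, pullback_apply, pullback_apply, h1]
    · rw [resolutionMap_odd g hk, resolutionMap_odd r hk]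
      exact Finset.sum_congr rfl fun j _ => by rw [pullback_apply, hmap l hl j]
  have h1 := hclass (fun k => pullback lab (b k)) hb0 fun j _ l hl => hpull j l hl
  rw [hc] at h1
  · exact absurd h1 (by decide)
  · intro l _
    rw [← pullback_coboundary, pullback_apply]
    by_cases hlen : (l.map lab).length = k + 1
    · refine (halt k).coboundary.eq_zero_of_not_nodup fun hnd => ?_
      have := hnd.length_le_card
      omega
    · exact coboundary_eq_zero_of_length _ k 0 (hdeg k) _ hlen

end Division

section Labels

/-- Two copies of `ℤ/5`, the vertices of the join of two boundaries of 4-simplices. -/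
abbrev PentagonLabel := Fin 2 × ZMod 5

/-- The translation action of `ℤ/5` on labels. -/
def labelShift (s : ZMod 5) (p : PentagonLabel) : PentagonLabel := (p.1, p.2 + s)

lemma labelShift_labelShift (s t : ZMod 5) (p : PentagonLabel) :
    labelShift s (labelShift t p) = labelShift (t + s) p := by
  simp [labelShift, add_assoc]

lemma labelShift_zero (p : PentagonLabel) : labelShift 0 p = p := by simp [labelShift]

/-- The part of a set of labels in the copy `j` of `ℤ/5`. -/
def labelCopy (j : Fin 2) (S : Finset PentagonLabel) : Finset (ZMod 5) :=
  Finset.univ.filter fun i => (j, i) ∈ S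

/-- The mean of a subset of `ℤ/5`, as an element of `𝔽₅`. -/
def residueMean (S : Finset (ZMod 5)) : ZMod 5 := (∑ i ∈ S, i) * (S.card : ZMod 5) ^ 3

/-- The mean of the first nonempty copy in a set of labels. -/
def labelMean (S : Finset PentagonLabel) : ZMod 5 :=
  if (labelCopy 0 S).Nonempty then residueMean (labelCopy 0 S) else residueMean (labelCopy 1 S)

lemma residueMean_image_add_one (S : Finset (ZMod 5)) (hne : S.Nonempty)
    (huniv : ∃ i, i ∉ S) : residueMean (S.image (· + 1)) = residueMean S + 1 := by
  have hinj : Function.Injective (fun i : ZMod 5 => i + 1) := add_left_injective 1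
  have hcard : (S.card : ZMod 5) ^ 4 = 1 := by
    obtain ⟨i, hi⟩ := huniv
    have h1 : 0 < S.card := hne.card_pos
    have h2 : S.card < 5 := by
      have : S ⊂ Finset.univ := Finset.ssubset_univ_iff.2 fun h => hi (h ▸ Finset.mem_univ i)
      simpa [ZMod.card] using Finset.card_lt_card this
    generalize S.card = n at h1 h2
    interval_cases n <;> rfl
  rw [residueMean, residueMean, Finset.card_image_of_injective _ hinj,
    Finset.sum_image fun _ _ _ _ h => hinj h, Finset.sum_add_distrib, Finset.sum_const,
    nsmul_eq_mul, mul_one]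
  linear_combination hcard

lemma labelCopy_image (j : Fin 2) (S : Finset PentagonLabel) :
    labelCopy j (S.image (labelShift 1)) = (labelCopy j S).image (· + 1) := by
  ext i
  simp only [labelCopy, Finset.mem_filter, Finset.mem_univ, true_and, Finset.mem_image,
    labelShift, Prod.mk.injEq, Prod.exists]
  constructor
  · rintro ⟨a, b, h, rfl, rfl⟩
    exact ⟨b, h, rfl⟩
  · rintro ⟨b, h, rfl⟩
    exact ⟨j, b, h, rfl, rfl⟩

lemma labelMean_image (S : Finset PentagonLabel) (hne : S.Nonempty)
    (huniv : ∀ j, ∃ i, (j, i) ∉ S) :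
    labelMean (S.image (labelShift 1)) = labelMean S + 1 := by
  have hu : ∀ j, ∃ i, i ∉ labelCopy j S := fun j => by simpa [labelCopy] using huniv j
  simp only [labelMean, labelCopy_image, Finset.image_nonempty]
  split_ifs with h0
  · exact residueMean_image_add_one _ h0 (hu 0)
  · refine residueMean_image_add_one _ ?_ (hu 1)
    obtain ⟨⟨j, i⟩, hji⟩ := hne
    fin_cases j
    · exact absurd ⟨i, by simpa [labelCopy] using hji⟩ h0
    · exact ⟨i, by simpa [labelCopy] using hji⟩

lemma freeFamily_label : FreeFamily (labelShift 1) {l | ∀ j, ∃ i, (j, i) ∉ l}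
    (fun l => labelMean l.toFinset) where
  iterate := by decide
  map_mem := by
    intro l hl j
    obtain ⟨i, hi⟩ := hl j
    refine ⟨i + 1, fun h => hi ?_⟩
    obtain ⟨⟨j', i'⟩, hp, he⟩ := List.mem_map.1 h
    simp only [labelShift, Prod.mk.injEq, add_left_inj] at he
    rwa [← he.1, ← he.2]
  sublist_mem := fun l hl l' hl' j => (hl j).imp fun i hi h => hi (hl'.subset h)
  equivariant := by
    intro l hl hne
    have himg : (l.map (labelShift 1)).toFinset = l.toFinset.image (labelShift 1) := by
      ext; simp
    simp only [himg]
    exact labelMean_image _ (by simpa [List.toFinset_nonempty_iff] using hne)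
      fun j => by simpa using hl j
  swap := by
    intro l₁ l₂ x y
    congr 1
    ext z
    simp only [List.mem_toFinset, List.mem_append, List.mem_cons]
    tauto

/-- An equivariant choice of an element of a proper nonempty set of labels. -/
lemma exists_equivariant_choice : ∃ e : Finset PentagonLabel → PentagonLabel,
    ∀ S : Finset PentagonLabel, S.Nonempty → (∀ j, ∃ i, (j, i) ∉ S) →
      e S ∈ S ∧ e (S.image (labelShift 1)) = labelShift 1 (e S) := by
  have hex : ∀ S : Finset PentagonLabel, ∃ p, S.Nonempty → p ∈ S := fun S => by
    by_cases h : S.Nonempty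
    · exact ⟨_, fun _ => h.choose_spec⟩
    · exact ⟨0, fun h' => absurd h' h⟩
  choose c hc using hex
  refine ⟨fun S => labelShift (labelMean S) (c (S.image (labelShift (-labelMean S)))), ?_⟩
  intro S hne huniv
  constructor
  · obtain ⟨p, hp, he⟩ := Finset.mem_image.1 (hc _ (hne.image (labelShift (-labelMean S))))
    simp only
    rw [← he, labelShift_labelShift, neg_add_cancel, labelShift_zero]
    exact hp
  · have himg : (S.image (labelShift 1)).image (labelShift (-(labelMean S + 1))) =
        S.image (labelShift (-labelMean S)) := by
      rw [Finset.image_image]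
      congr 1
      funext p
      rw [Function.comp_apply, labelShift_labelShift]
      congr 1
      ring
    simp only [labelMean_image S hne huniv, himg]
    rw [labelShift_labelShift]

end Labels

/-- The ordered simplices with vertices in `X` and pairwise distances less than `δ`. -/
def smallSimplices {V : Type*} [Dist V] (X : Set V) (δ : ℝ) : Set (List V) :=
  {l | ∀ x ∈ l, x ∈ X ∧ ∀ y ∈ l, dist x y < δ}

/-- A Borsuk–Ulam type theorem: equivariant functions with zero sums over the two copies of
`ℤ/5` have a common zero on a compact set carrying the class in degree ten. -/
lemma exists_zero_of_carriesClass {V : Type*} [PseudoMetricSpace V] (g : V → V) (X : Set V)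
    (hX : IsCompact X) (hne : X.Nonempty) (hgX : ∀ x ∈ X, g x ∈ X)
    (hclass : ∀ δ > 0, CarriesClass g 10 (smallSimplices X δ))
    (u : PentagonLabel → V → ℝ) (hu : ∀ p, Continuous (u p))
    (hug : ∀ p x, u (labelShift 1 p) (g x) = u p x)
    (hsum : ∀ j x, ∑ i, u (j, i) x = 0) : ∃ x ∈ X, ∀ p, u p x = 0 := by
  classical
  by_contra! hcon
  obtain ⟨ε, hε, hεX⟩ : ∃ ε > 0, ∀ x ∈ X, ∃ p, ε ≤ u p x := by
    let φ : V → ℝ := fun x => ∑ p, max (u p x) 0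
    have hφ : Continuous φ := by fun_prop
    obtain ⟨x₀, hx₀, hmin⟩ := hX.exists_isMinOn hne hφ.continuousOn
    have hpos : 0 < φ x₀ := by
      obtain ⟨⟨j, i⟩, hp⟩ := hcon x₀ hx₀
      obtain ⟨i', -, hi'⟩ : ∃ i' ∈ Finset.univ, 0 < u (j, i') x₀ :=
        Finset.exists_pos_of_sum_zero_of_exists_nonzero _ (hsum j x₀) ⟨i, Finset.mem_univ i, hp⟩
      exact Finset.sum_pos' (fun p _ => le_max_right _ _)
        ⟨(j, i'), Finset.mem_univ _, lt_max_of_lt_left hi'⟩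
    refine ⟨φ x₀ / 10, by positivity, fun x hx => ?_⟩
    by_contra! hlt
    have h1 : φ x < ∑ _p : PentagonLabel, φ x₀ / 10 :=
      Finset.sum_lt_sum_of_nonempty Finset.univ_nonempty fun p _ =>
        max_lt (hlt p) (by positivity)
    have h2 : φ x₀ ≤ φ x := hmin hx
    have h3 : (Fintype.card PentagonLabel : ℝ) = 10 := by
      rw [Fintype.card_prod, ZMod.card, Fintype.card_fin]; norm_num
    rw [Finset.sum_const, Finset.card_univ, nsmul_eq_mul, h3] at h1
    linarith
  obtain ⟨δ, hδ, hδX⟩ : ∃ δ > 0, ∀ x ∈ X, ∀ y ∈ X, dist x y < δ → ∀ p,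
      |u p x - u p y| < ε := by
    have hcont : Continuous fun x => fun p => u p x := continuous_pi hu
    have huc := hX.uniformContinuousOn_of_continuous hcont.continuousOn
    obtain ⟨δ, hδ, h⟩ := Metric.uniformContinuousOn_iff.1 huc ε hε
    refine ⟨δ, hδ, fun x hx y hy hxy p => ?_⟩
    exact lt_of_le_of_lt (dist_le_pi_dist (fun p => u p x) (fun p => u p y) p) (h x hx y hy hxy)
  let M : V → Finset PentagonLabel := fun x => Finset.univ.filter fun p => ε ≤ u p x
  have hM : ∀ x p, p ∈ M x ↔ ε ≤ u p x := fun x p => by simp [M]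
  have hMg : ∀ x, M (g x) = (M x).image (labelShift 1) := by
    intro x
    ext p
    rw [hM, Finset.mem_image]
    constructor
    · intro h
      have hp : labelShift 1 (labelShift (-1) p) = p := by
        rw [labelShift_labelShift, neg_add_cancel, labelShift_zero]
      refine ⟨labelShift (-1) p, ?_, hp⟩
      rw [hM, ← hug, hp]
      exact h
    · rintro ⟨q, hq, rfl⟩
      rw [hug]
      exact (hM _ _).1 hq
  have hnotall : ∀ x j, ¬ ∀ i, 0 < u (j, i) x := fun x j h =>
    (Finset.sum_pos (fun i _ => h i) Finset.univ_nonempty).ne' (hsum j x)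
  have hMne : ∀ x ∈ X, (M x).Nonempty := fun x hx =>
    (hεX x hx).imp fun p hp => (hM x p).2 hp
  have hMproper : ∀ x j, ∃ i, (j, i) ∉ M x := by
    intro x j
    by_contra! h
    exact hnotall x j fun i => hε.trans_le ((hM _ _).1 (h i))
  obtain ⟨e, he⟩ := exists_equivariant_choice
  have hcard : Fintype.card PentagonLabel ≤ 10 := by
    rw [Fintype.card_prod, ZMod.card, Fintype.card_fin]
  refine not_carriesClass_of_labelling freeFamily_label hcard (fun x => e (M x)) ?_ ?_
    (hclass δ hδ)
  · intro l hl j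
    by_contra! h
    obtain ⟨x₀, hx₀, -⟩ := List.mem_map.1 (h 0)
    refine hnotall x₀ j fun i => ?_
    obtain ⟨x, hx, hxi⟩ := List.mem_map.1 (h i)
    have h1 : ε ≤ u (j, i) x := by
      rw [← hM, ← hxi]
      exact (he _ (hMne x (hl x hx).1) (hMproper x)).1
    have h2 := hδX x (hl x hx).1 x₀ (hl x₀ hx₀).1 ((hl x hx).2 x₀ hx₀) (j, i)
    have h3 := (abs_lt.1 h2).2
    linarith
  · intro l hl x hx j
    have hgj : g^[j] x ∈ X ∧ e (M (g^[j] x)) = (labelShift 1)^[j] (e (M x)) := by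
      induction j with
      | zero => exact ⟨(hl x hx).1, rfl⟩
      | succ j ih =>
        rw [Function.iterate_succ', Function.iterate_succ']
        refine ⟨hgX _ ih.1, ?_⟩
        rw [Function.comp_apply, Function.comp_apply, hMg,
          (he _ (hMne _ ih.1) (hMproper _)).2, ih.2]
    exact hgj.2

section Carrier

variable {E : Type*} [NormedAddCommGroup E] [NormedSpace ℝ E]

/-- Cyclic rotation of a 5-tuple of vectors. -/
def cyclicShift (E : Type*) [NormedAddCommGroup E] [NormedSpace ℝ E] (s : ZMod 5) :
    (ZMod 5 → E) →ₗ[ℝ] (ZMod 5 → E) :=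
  LinearMap.funLeft ℝ E fun i => i - s

@[simp] lemma cyclicShift_apply (s : ZMod 5) (x : ZMod 5 → E) (i : ZMod 5) :
    cyclicShift E s x i = x (i - s) := rfl

lemma cyclicShift_cyclicShift (s t : ZMod 5) (x : ZMod 5 → E) :
    cyclicShift E s (cyclicShift E t x) = cyclicShift E (s + t) x := by
  funext i
  simp [sub_sub]

lemma cyclicShift_zero (x : ZMod 5 → E) : cyclicShift E 0 x = x := by
  funext i
  simp

lemma cyclicShift_one_iterate (x : ZMod 5 → E) : (cyclicShift E 1)^[5] x = x := by
  simp only [Function.iterate_succ, Function.iterate_zero, Function.comp_apply, id_eq,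
    cyclicShift_cyclicShift]
  exact cyclicShift_zero x

/-- The subspace of constant 5-tuples. -/
def constantTuples (E : Type*) [NormedAddCommGroup E] [NormedSpace ℝ E] :
    Submodule ℝ (ZMod 5 → E) :=
  LinearMap.range (LinearMap.pi fun _ => LinearMap.id : E →ₗ[ℝ] (ZMod 5 → E))

lemma mem_constantTuples {x : ZMod 5 → E} : x ∈ constantTuples E ↔ ∃ e, ∀ i, x i = e := by
  constructor
  · rintro ⟨e, rfl⟩
    exact ⟨e, fun i => rfl⟩
  · rintro ⟨e, he⟩
    exact ⟨e, funext fun i => (he i).symm⟩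

lemma cyclicShift_mem_constantTuples {x : ZMod 5 → E} (s : ZMod 5)
    (h : x ∈ constantTuples E) : cyclicShift E s x ∈ constantTuples E := by
  obtain ⟨e, he⟩ := mem_constantTuples.1 h
  exact mem_constantTuples.2 ⟨e, fun i => he _⟩

lemma exists_notMem_subspaces [FiniteDimensional ℝ E] (hE : Module.finrank ℝ E = 3)
    (𝓕 : Finset (Submodule ℝ (ZMod 5 → E))) (h𝓕 : ∀ U ∈ 𝓕, Module.finrank ℝ U < 15) :
    ∃ v, ∀ U ∈ 𝓕, v ∉ U := by
  have htop : (⊤ : Submodule ℝ (ZMod 5 → E)) ∉ 𝓕 := fun h => by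
    have h1 := h𝓕 _ h
    rw [finrank_top, Module.finrank_pi_fintype] at h1
    simp [hE, ZMod.card] at h1
  have hne := Subspace.biUnion_ne_univ_of_top_notMem htop
  obtain ⟨v, hv⟩ := (Set.ne_univ_iff_exists_notMem _).1 hne
  exact ⟨v, by simpa using hv⟩

lemma finrank_sup_span_le [FiniteDimensional ℝ E] (U : Submodule ℝ (ZMod 5 → E))
    (v : ZMod 5 → E) :
    Module.finrank ℝ ↥(U ⊔ Submodule.span ℝ {v}) ≤ Module.finrank ℝ U + 1 :=
  (Submodule.finrank_add_le_finrank_add_finrank _ _).trans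
    (Nat.add_le_add_left ((finrank_span_le_card _).trans (by simp)) _)

lemma finrank_constantTuples_le [FiniteDimensional ℝ E] (hE : Module.finrank ℝ E = 3) :
    Module.finrank ℝ (constantTuples E) ≤ 3 :=
  hE ▸ LinearMap.finrank_range_le _

/-- Contraction of small simplices onto a cone point, in the setting of `CarriesClass`. -/
lemma carriesClass_cone {X X' : Set (ZMod 5 → E)} (hX : IsCompact X)
    (hgX : ∀ s, ∀ x ∈ X, cyclicShift E s x ∈ X) (v : ZMod 5 → E) (hv : v ∈ X')
    (hline : ∀ x ∈ X, ∀ t ∈ Set.Icc (0 : ℝ) 1, AffineMap.lineMap x v t ∈ X') (k : ℕ)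
    (hclass : ∀ δ > 0, CarriesClass (cyclicShift E 1) k (smallSimplices X δ)) (δ : ℝ)
    (hδ : 0 < δ) : CarriesClass (cyclicShift E 1) (k + 1) (smallSimplices X' δ) := by
  obtain ⟨R, hR⟩ : ∃ R, ∀ x ∈ X, dist x v ≤ R := by
    obtain ⟨R, hR⟩ := hX.isBounded.subset_closedBall v
    exact ⟨R, fun x hx => hR hx⟩
  obtain ⟨n, hn⟩ := exists_nat_gt (R / (δ / 2))
  have hm : (0 : ℝ) < ((n + 1 : ℕ) : ℝ) := by positivity
  have hRm : R / ((n + 1 : ℕ) : ℝ) < δ / 2 := by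
    rw [div_lt_iff₀ (by positivity)] at hn ⊢
    push_cast
    nlinarith
  set m : ℕ := n + 1 with hmdef
  let s : ℕ → (ZMod 5 → E) → (ZMod 5 → E) := fun t x => AffineMap.lineMap x v ((t : ℝ) / m)
  have hIcc : ∀ t ≤ m, (t : ℝ) / m ∈ Set.Icc (0 : ℝ) 1 := fun t ht =>
    ⟨by positivity, (div_le_one hm).2 (by exact_mod_cast ht)⟩
  have hsame : ∀ t ≤ m, ∀ x y, dist (s t x) (s t y) ≤ dist x y := by
    intro t ht x y
    obtain ⟨h0, h1⟩ := hIcc t ht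
    have : s t x - s t y = (1 - (t : ℝ) / m) • (x - y) := by
      simp only [s, AffineMap.lineMap_apply_module]
      module
    rw [dist_eq_norm, this, norm_smul, Real.norm_eq_abs, abs_of_nonneg (by linarith),
      dist_eq_norm]
    exact mul_le_of_le_one_left (norm_nonneg _) (by linarith)
  have hstep : ∀ t, ∀ x ∈ X, dist (s t x) (s (t + 1) x) < δ / 2 := by
    intro t x hx
    refine lt_of_le_of_lt ?_ hRm
    rw [dist_lineMap_lineMap, div_eq_inv_mul R]
    have h1 : dist ((t : ℝ) / m) (((t + 1 : ℕ) : ℝ) / m) = (m : ℝ)⁻¹ := by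
      rw [Real.dist_eq, ← sub_div, abs_div, abs_of_pos hm]
      push_cast
      simp
    rw [h1]
    exact mul_le_mul_of_nonneg_left (hR x hx) (by positivity)
  refine (hclass (δ / 2) (by positivity)).succ cyclicShift_one_iterate ?_ ?_ v s m
    (fun x => by simp [s]) (fun x => by simp [s]) ?_ ?_
  · intro l hl x hx
    refine ⟨?_, fun y hy => ((hl x hx).2 y hy).trans (by linarith)⟩
    simpa using hline x (hl x hx).1 0 (by simp)
  · intro l hl x hx
    obtain ⟨x', hx', rfl⟩ := List.mem_map.1 hx
    refine ⟨hgX _ _ (hl x' hx').1, fun y hy => ?_⟩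
    obtain ⟨y', hy', rfl⟩ := List.mem_map.1 hy
    refine lt_of_le_of_lt ?_ ((hl x' hx').2 y' hy')
    exact (dist_pi_le_iff dist_nonneg).2 fun i => dist_le_pi_dist x' y' _
  · intro l hl
    have hall : ∀ y ∈ v :: l.map (fun _ => v), y = v := by
      intro y hy
      rcases List.mem_cons.1 hy with rfl | hy
      · rfl
      · obtain ⟨_, _, rfl⟩ := List.mem_map.1 hy
        rfl
    intro x hx
    refine ⟨hall x hx ▸ hv, fun y hy => ?_⟩
    rw [hall x hx, hall y hy, dist_self]
    exact hδ
  · intro t ht l hl l' hl' y hy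
    have key : ∀ y ∈ l', ∃ x ∈ l, y ∈ X' ∧ dist y (s t x) < δ / 2 ∧
        (y = s t x ∨ y = s (t + 1) x) := by
      intro y hy
      obtain ⟨x, hx, h⟩ := hl' y hy
      have hxX := (hl x hx).1
      refine ⟨x, hx, ?_, ?_, h⟩
      · rcases h with rfl | rfl
        · exact hline x hxX _ (hIcc t ht.le)
        · exact hline x hxX _ (hIcc (t + 1) ht)
      · rcases h with rfl | rfl
        · rw [dist_self]; positivity
        · rw [dist_comm]; exact hstep t x hxX
    obtain ⟨x, hx, hyX, hyd, hyx⟩ := key y hy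
    refine ⟨hyX, fun z hz => ?_⟩
    obtain ⟨w, hw, -, hzd, hzw⟩ := key z hz
    have hxw := (hl x hx).2 w hw
    have h1 := hsame t ht.le x w
    have h2 := hsame (t + 1) ht x w
    rcases hyx with rfl | rfl
    · have := dist_triangle_right (s t x) z (s t w)
      linarith
    · rcases hzw with rfl | rfl
      · have := dist_triangle (s (t + 1) x) (s t x) (s t w)
        linarith
      · linarith

/-- In each degree at most ten there is a compact invariant set of non-constant 5-tuples in a
three-dimensional space carrying the class of that degree. -/
lemma exists_carrier [FiniteDimensional ℝ E] (hE : Module.finrank ℝ E = 3) (k : ℕ)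
    (hk : k ≤ 10) :
    ∃ X : Set (ZMod 5 → E), IsCompact X ∧ X.Nonempty ∧
      (∀ s, ∀ x ∈ X, cyclicShift E s x ∈ X) ∧ (∀ x ∈ X, x ∉ constantTuples E) ∧
      (∃ 𝓕 : Finset (Submodule ℝ (ZMod 5 → E)),
        (∀ U ∈ 𝓕, constantTuples E ≤ U ∧ Module.finrank ℝ U ≤ k + 4) ∧
          ∀ x ∈ X, ∃ U ∈ 𝓕, x ∈ U) ∧
      ∀ δ > 0, CarriesClass (cyclicShift E 1) k (smallSimplices X δ) := by
  classical
  induction k with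
  | zero =>
    obtain ⟨v, hv⟩ := exists_notMem_subspaces hE {constantTuples E} fun U hU => by
      rw [Finset.mem_singleton.1 hU]
      exact (finrank_constantTuples_le hE).trans_lt (by norm_num)
    have hv := hv _ (Finset.mem_singleton_self _)
    refine ⟨Set.range fun s => cyclicShift E s v, (Set.finite_range _).isCompact,
      Set.range_nonempty _, ?_, ?_, ?_, ?_⟩
    · rintro s _ ⟨t, rfl⟩
      exact ⟨s + t, (cyclicShift_cyclicShift s t v).symm⟩
    · rintro _ ⟨s, rfl⟩ h
      have := cyclicShift_mem_constantTuples (-s) h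
      rw [cyclicShift_cyclicShift, neg_add_cancel, cyclicShift_zero] at this
      exact hv this
    · refine ⟨Finset.univ.image fun s =>
        constantTuples E ⊔ Submodule.span ℝ {cyclicShift E s v}, ?_, ?_⟩
      · intro U hU
        obtain ⟨s, -, rfl⟩ := Finset.mem_image.1 hU
        refine ⟨le_sup_left, (finrank_sup_span_le _ _).trans ?_⟩
        have := finrank_constantTuples_le hE
        omega
      · rintro _ ⟨s, rfl⟩
        exact ⟨_, Finset.mem_image_of_mem _ (Finset.mem_univ s),
          Submodule.mem_sup_right (Submodule.mem_span_singleton_self _)⟩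
    · intro δ hδ
      refine carriesClass_zero _ (x := v) ?_
      intro x hx
      rw [List.mem_singleton.1 hx]
      refine ⟨⟨0, cyclicShift_zero v⟩, fun y hy => ?_⟩
      rw [List.mem_singleton.1 hy, dist_self]
      exact hδ
  | succ k ih =>
    obtain ⟨X, hX, hne, hgX, hΔ, ⟨𝓕, h𝓕, hcov⟩, hclass⟩ := ih (by omega)
    obtain ⟨v, hv⟩ := exists_notMem_subspaces hE 𝓕 fun U hU => by
      have := (h𝓕 U hU).2
      omega
    let J : ZMod 5 → (ZMod 5 → E) × ℝ → (ZMod 5 → E) := fun s q =>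
      AffineMap.lineMap q.1 (cyclicShift E s v) q.2
    have hJ : ∀ s x t, J s (x, t) = (1 - t) • x + t • cyclicShift E s v := fun s x t =>
      AffineMap.lineMap_apply_module _ _ _
    have hJcont : ∀ s, Continuous (J s) := by
      intro s
      have : J s = fun q => (1 - q.2) • q.1 + q.2 • cyclicShift E s v := funext fun q => hJ s q.1 q.2
      rw [this]
      fun_prop
    let X' : Set (ZMod 5 → E) := ⋃ s, J s '' (X ×ˢ Set.Icc 0 1)
    have hX' : ∀ s, ∀ x ∈ X, ∀ t ∈ Set.Icc (0 : ℝ) 1, J s (x, t) ∈ X' := fun s x hx t ht =>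
      Set.mem_iUnion.2 ⟨s, (x, t), ⟨hx, ht⟩, rfl⟩
    obtain ⟨x₀, hx₀⟩ := hne
    have hvX' : v ∈ X' := by
      have := hX' 0 x₀ hx₀ 1 (by simp)
      rwa [hJ, sub_self, zero_smul, zero_add, one_smul, cyclicShift_zero] at this
    refine ⟨X', ?_, ⟨v, hvX'⟩, ?_, ?_, ?_, ?_⟩
    · exact isCompact_iUnion fun s => (hX.prod isCompact_Icc).image (hJcont s)
    · intro s y hy
      obtain ⟨s', ⟨x, t⟩, ⟨hx, ht⟩, rfl⟩ := Set.mem_iUnion.1 hy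
      have : cyclicShift E s (J s' (x, t)) = J (s + s') (cyclicShift E s x, t) := by
        rw [hJ, hJ, map_add, map_smul, map_smul, cyclicShift_cyclicShift]
      rw [this]
      exact hX' _ _ (hgX s x hx) t ht
    · intro y hy hyΔ
      obtain ⟨s, ⟨x, t⟩, ⟨hx, ht⟩, rfl⟩ := Set.mem_iUnion.1 hy
      by_cases ht0 : t = 0
      · subst ht0
        rw [hJ, sub_zero, one_smul, zero_smul, add_zero] at hyΔ
        exact hΔ x hx hyΔ
      · have hyΔ' := cyclicShift_mem_constantTuples (-s) hyΔ
        obtain ⟨U, hU, hxU⟩ := hcov _ (hgX (-s) x hx)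
        have h1 := (h𝓕 U hU).1 hyΔ'
        rw [hJ, map_add, map_smul, map_smul, cyclicShift_cyclicShift, neg_add_cancel,
          cyclicShift_zero, Submodule.add_mem_iff_right _ (U.smul_mem _ hxU)] at h1
        exact hv U hU ((Submodule.smul_mem_iff _ ht0).1 h1)
    · refine ⟨Finset.image₂ (fun U s => U ⊔ Submodule.span ℝ {cyclicShift E s v}) 𝓕
        Finset.univ, ?_, ?_⟩
      · intro U' hU'
        obtain ⟨U, hU, s, -, rfl⟩ := Finset.mem_image₂.1 hU'
        refine ⟨(h𝓕 U hU).1.trans le_sup_left, (finrank_sup_span_le _ _).trans ?_⟩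
        have := (h𝓕 U hU).2
        omega
      · intro y hy
        obtain ⟨s, ⟨x, t⟩, ⟨hx, ht⟩, rfl⟩ := Set.mem_iUnion.1 hy
        obtain ⟨U, hU, hxU⟩ := hcov x hx
        refine ⟨_, Finset.mem_image₂_of_mem hU (Finset.mem_univ s), ?_⟩
        rw [hJ]
        exact Submodule.add_mem_sup (U.smul_mem _ hxU)
          (Submodule.smul_mem _ _ (Submodule.mem_span_singleton_self _))
    · intro δ hδ
      refine carriesClass_cone hX hgX v hvX' (fun x hx t ht => ?_) k hclass δ hδ
      have := hX' 0 x hx t ht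
      simpa only [J, cyclicShift_zero] using this

/-- Two continuous functions of a 5-tuple of points in a three-dimensional space are
simultaneously invariant under the cyclic rotations of some non-constant 5-tuple. -/
lemma exists_cyclically_equal [FiniteDimensional ℝ E] (hE : Module.finrank ℝ E = 3)
    (d : Fin 2 → (ZMod 5 → E) → ℝ) (hd : ∀ j, Continuous (d j)) :
    ∃ x : ZMod 5 → E, (¬ ∃ e, ∀ i, x i = e) ∧
      ∀ j, ∃ c, ∀ i, d j (fun k => x (i + k)) = c := by
  obtain ⟨X, hX, hne, hgX, hΔ, -, hclass⟩ := exists_carrier hE 10 le_rfl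
  let D : Fin 2 → ZMod 5 → (ZMod 5 → E) → ℝ := fun j i x => d j (fun k => x (i + k))
  have hD : ∀ j i, Continuous (D j i) := fun j i => (hd j).comp (by fun_prop)
  have hDg : ∀ j i x, D j (i + 1) (cyclicShift E 1 x) = D j i x := by
    intro j i x
    simp only [D, cyclicShift_apply]
    congr 1
    funext k
    congr 1
    ring
  let u : PentagonLabel → (ZMod 5 → E) → ℝ := fun p x => D p.1 p.2 x - (∑ i, D p.1 i x) / 5
  obtain ⟨x, hx, hux⟩ := exists_zero_of_carriesClass (cyclicShift E 1) X hX hne (hgX 1) hclass u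
    (fun p => by
      have := hD p.1
      fun_prop)
    (fun p x => by
      have h : ∑ i, D p.1 i (cyclicShift E 1 x) = ∑ i, D p.1 i x := by
        rw [← Equiv.sum_comp (Equiv.addRight (1 : ZMod 5))]
        exact Finset.sum_congr rfl fun i _ => hDg p.1 i x
      simp only [u, labelShift, hDg, h])
    (fun j x => by
      simp only [u, Finset.sum_sub_distrib, Finset.sum_const, Finset.card_univ, ZMod.card,
        nsmul_eq_mul]
      push_cast
      ring)
  exact ⟨x, fun h => hΔ x hx (mem_constantTuples.2 h),
    fun j => ⟨(∑ i, D j i x) / 5, fun i => sub_eq_zero.1 (hux (j, i))⟩⟩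

end Carrier

lemma IsMetricEquivToStd.continuous {E : Type*} [TopologicalSpace E] {ρ : E → E → ℝ}
    (h : IsMetricEquivToStd ρ) : Continuous fun p : E × E => ρ p.1 p.2 := by
  obtain ⟨hsymm, hzero, htri, hopen⟩ := h
  have hball : ∀ x, ∀ ε > 0, {y | ρ x y < ε} ∈ nhds x := by
    intro x ε hε
    refine IsOpen.mem_nhds ((hopen _).2 fun z hz => ⟨ε - ρ x z, sub_pos.2 hz, fun y hy => ?_⟩) ?_
    · have h1 := htri x z y
      rw [Set.mem_ofPred_eq] at hy ⊢
      linarith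
    · rw [Set.mem_ofPred_eq, (hzero x x).2 rfl]
      exact hε
  rw [continuous_iff_continuousAt]
  rintro ⟨x, y⟩
  rw [ContinuousAt, Metric.tendsto_nhds]
  intro ε hε
  rw [nhds_prod_eq]
  filter_upwards [Filter.prod_mem_prod (hball x (ε / 2) (by positivity))
    (hball y (ε / 2) (by positivity))]
  rintro ⟨x', y'⟩ ⟨hx, hy⟩
  simp only [Set.mem_ofPred_eq] at hx hy
  rw [Real.dist_eq, abs_lt]
  have h1 := htri x' x y'
  have h2 := htri x y y'
  have h3 := htri x x' y
  have h4 := htri x' y' y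
  rw [hsymm x' x] at h1
  rw [hsymm y' y] at h4
  constructor <;> linarith

/-- A closed 5-tuple with equal steps of residue `1` in one metric and equal steps of residue
`2` in another metric is constant or has distinct vertices. -/
lemma injective_of_equal_steps {E : Type*} {ρ₁ ρ₂ : E → E → ℝ}
    (h₁ : ∀ x y, ρ₁ x y = 0 ↔ x = y) (h₂ : ∀ x y, ρ₂ x y = 0 ↔ x = y) {y : ZMod 5 → E}
    {c₁ c₂ : ℝ} (hc₁ : ∀ i, ρ₁ (y i) (y (i + 1)) = c₁) (hc₂ : ∀ i, ρ₂ (y i) (y (i + 2)) = c₂)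
    (hy : ¬ ∀ i, y i = y 0) : Function.Injective y := by
  have s₁ : ∀ i, y i ≠ y (i + 1) := by
    intro i hi
    have hc : c₁ = 0 := by rw [← hc₁ i]; exact (h₁ _ _).2 hi
    have hstep : ∀ i, y i = y (i + 1) := fun i => (h₁ _ _).1 ((hc₁ i).trans hc)
    have h01 : y 0 = y 1 := hstep 0
    have h12 : y 1 = y 2 := hstep 1
    have h23 : y 2 = y 3 := hstep 2
    have h34 : y 3 = y 4 := hstep 3
    refine hy fun i => ?_
    have : i = 0 ∨ i = 1 ∨ i = 2 ∨ i = 3 ∨ i = 4 := by revert i; decide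
    rcases this with rfl | rfl | rfl | rfl | rfl <;> simp [h01, h12, h23, h34]
  have s₂ : ∀ i, y i ≠ y (i + 2) := by
    intro i hi
    have hc : c₂ = 0 := by rw [← hc₂ i]; exact (h₂ _ _).2 hi
    have hstep : ∀ i, y i = y (i + 2) := fun i => (h₂ _ _).1 ((hc₂ i).trans hc)
    have h02 : y 0 = y 2 := hstep 0
    have h24 : y 2 = y 4 := hstep 2
    have h41 : y 4 = y 1 := hstep 4
    have h13 : y 1 = y 3 := hstep 1
    refine hy fun i => ?_
    have : i = 0 ∨ i = 1 ∨ i = 2 ∨ i = 3 ∨ i = 4 := by revert i; decide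
    rcases this with rfl | rfl | rfl | rfl | rfl <;> simp [h02, h24, h41, h13]
  intro i j hij
  by_contra hne
  have : j = i + 1 ∨ j = i + 2 ∨ i = j + 1 ∨ i = j + 2 := by
    clear hij
    revert i j
    decide
  rcases this with rfl | rfl | rfl | rfl
  · exact s₁ _ hij
  · exact s₂ _ hij
  · exact s₁ _ hij.symm
  · exact s₂ _ hij.symm

lemma exists_continuous_injective_sphere :
    ∃ h : EuclideanSpace ℝ (Fin 3) → Metric.sphere (0 : EuclideanSpace ℝ (Fin 4)) 1,
      Continuous h ∧ Function.Injective h := by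
  have : Fact (Module.finrank ℝ (EuclideanSpace ℝ (Fin 4)) = 3 + 1) := ⟨by simp⟩
  let v : Metric.sphere (0 : EuclideanSpace ℝ (Fin 4)) 1 :=
    ⟨EuclideanSpace.single 0 1, by simp⟩
  have ht : (stereographic' 3 v).symm.source = Set.univ := by simp
  refine ⟨(stereographic' 3 v).symm, ?_, ?_⟩
  · have := (stereographic' 3 v).symm.continuousOn
    rwa [ht, continuousOn_univ] at this
  · have := (stereographic' 3 v).symm.injOn
    rwa [ht, Set.injOn_univ] at this

/-- The pair `(3, 5)` is admissible: for every continuous injective `f : S³ → ℝ⁴` and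
metrics `ρ₁, ρ₂` equivalent to the Euclidean metric there are five distinct points of
`S³` whose images form a `ρ₁`-equilateral pentagon `C₁` and a `ρ₂`-equilateral
pentagon `C₂`. -/
theorem pentagon_on_deformed_three_sphere
    (f : Metric.sphere (0 : EuclideanSpace ℝ (Fin 4)) 1 → EuclideanSpace ℝ (Fin 4))
    (hf : Continuous f) (hfinj : Function.Injective f)
    (ρ₁ ρ₂ : EuclideanSpace ℝ (Fin 4) → EuclideanSpace ℝ (Fin 4) → ℝ)
    (hρ₁ : IsMetricEquivToStd ρ₁) (hρ₂ : IsMetricEquivToStd ρ₂) :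
    ∃ x₀ x₁ x₂ x₃ x₄ : Metric.sphere (0 : EuclideanSpace ℝ (Fin 4)) 1,
      x₀ ≠ x₁ ∧ x₀ ≠ x₂ ∧ x₀ ≠ x₃ ∧ x₀ ≠ x₄ ∧
      x₁ ≠ x₂ ∧ x₁ ≠ x₃ ∧ x₁ ≠ x₄ ∧ x₂ ≠ x₃ ∧ x₂ ≠ x₄ ∧ x₃ ≠ x₄ ∧
      (ρ₁ (f x₀) (f x₁) = ρ₁ (f x₁) (f x₂) ∧ ρ₁ (f x₁) (f x₂) = ρ₁ (f x₂) (f x₃) ∧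
        ρ₁ (f x₂) (f x₃) = ρ₁ (f x₃) (f x₄) ∧ ρ₁ (f x₃) (f x₄) = ρ₁ (f x₄) (f x₀)) ∧
      (ρ₂ (f x₀) (f x₂) = ρ₂ (f x₂) (f x₄) ∧ ρ₂ (f x₂) (f x₄) = ρ₂ (f x₄) (f x₁) ∧
        ρ₂ (f x₄) (f x₁) = ρ₂ (f x₁) (f x₃) ∧ ρ₂ (f x₁) (f x₃) = ρ₂ (f x₃) (f x₀)) := by
  obtain ⟨h, hh, hhinj⟩ := exists_continuous_injective_sphere
  have hd₁ : Continuous fun x : ZMod 5 → EuclideanSpace ℝ (Fin 3) =>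
      ρ₁ (f (h (x 0))) (f (h (x 1))) :=
    hρ₁.continuous.comp ((hf.comp (hh.comp (continuous_apply 0))).prodMk
      (hf.comp (hh.comp (continuous_apply 1))))
  have hd₂ : Continuous fun x : ZMod 5 → EuclideanSpace ℝ (Fin 3) =>
      ρ₂ (f (h (x 0))) (f (h (x 2))) :=
    hρ₂.continuous.comp ((hf.comp (hh.comp (continuous_apply 0))).prodMk
      (hf.comp (hh.comp (continuous_apply 2))))
  obtain ⟨x, hx, hc⟩ := exists_cyclically_equal (E := EuclideanSpace ℝ (Fin 3)) (by simp)
    ![_, _] (Fin.forall_fin_two.2 ⟨hd₁, hd₂⟩)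
  obtain ⟨⟨c₁, hc₁⟩, ⟨c₂, hc₂⟩⟩ := Fin.forall_fin_two.1 hc
  simp only [Matrix.cons_val_zero, Matrix.cons_val_one, add_zero] at hc₁ hc₂
  have hinj : Function.Injective fun i => f (h (x i)) :=
    injective_of_equal_steps hρ₁.2.1 hρ₂.2.1 hc₁ hc₂
      fun hconst => hx ⟨x 0, fun i => hhinj (hfinj (hconst i))⟩
  have hne : ∀ i j : ZMod 5, i ≠ j → h (x i) ≠ h (x j) := fun i j hij he =>
    hij (hinj (congrArg f he))
  have a₀ : ρ₁ (f (h (x 0))) (f (h (x 1))) = c₁ := hc₁ 0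
  have a₁ : ρ₁ (f (h (x 1))) (f (h (x 2))) = c₁ := hc₁ 1
  have a₂ : ρ₁ (f (h (x 2))) (f (h (x 3))) = c₁ := hc₁ 2
  have a₃ : ρ₁ (f (h (x 3))) (f (h (x 4))) = c₁ := hc₁ 3
  have a₄ : ρ₁ (f (h (x 4))) (f (h (x 0))) = c₁ := hc₁ 4
  have b₀ : ρ₂ (f (h (x 0))) (f (h (x 2))) = c₂ := hc₂ 0
  have b₁ : ρ₂ (f (h (x 1))) (f (h (x 3))) = c₂ := hc₂ 1
  have b₂ : ρ₂ (f (h (x 2))) (f (h (x 4))) = c₂ := hc₂ 2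
  have b₃ : ρ₂ (f (h (x 3))) (f (h (x 0))) = c₂ := hc₂ 3
  have b₄ : ρ₂ (f (h (x 4))) (f (h (x 1))) = c₂ := hc₂ 4
  refine ⟨h (x 0), h (x 1), h (x 2), h (x 3), h (x 4),
    hne _ _ (by decide), hne _ _ (by decide), hne _ _ (by decide), hne _ _ (by decide),
    hne _ _ (by decide), hne _ _ (by decide), hne _ _ (by decide), hne _ _ (by decide),
    hne _ _ (by decide), hne _ _ (by decide), ?_, ?_⟩
  · rw [a₀, a₁, a₂, a₃, a₄]
    exact ⟨rfl, rfl, rfl, rfl⟩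
  · rw [b₀, b₁, b₂, b₃, b₄]
    exact ⟨rfl, rfl, rfl, rfl⟩
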